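/- Let N ≥ 1, let a, b be polynomials over F₂ = ZMod 2 of degree < N with coefficient vectors va, vb ∈ (ZMod 2)^N, let A = circulant va, B = circulant vb, H_X = [A B], H_Z = [Bᵀ Aᵀ], and let g = gcd(gcd(a,b), X^N − 1) in (ZMod 2)[X]. Then rank H_X = rank H_Z = N − deg g; consequently, setting k := 2N − rank H_X − rank H_Z (the number of logical qubits) and r_X := N − rank H_X, r_Z := N − rank H_Z (the numbers of independent redundant X- and Z-stabilizers), one has k = 2·deg g and r_X = r_Z = deg g = k/2. -/

import Mathlib

open Matrix Polynomial

/-- The polynomial `∑ i, vᵢ Xⁱ` associated with a coefficient vector `v ∈ (ZMod 2)^N`. -/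
noncomputable def polyOfVec {N : ℕ} (v : Fin N → ZMod 2) : Polynomial (ZMod 2) :=
  ∑ i : Fin N, Polynomial.C (v i) * Polynomial.X ^ (i : ℕ)

lemma aeval_polyOfVec {N : ℕ} {K : Type*} [CommRing K] [Algebra (ZMod 2) K] (x : K)
    (v : Fin N → ZMod 2) :
    aeval x (polyOfVec v) = ∑ i : Fin N, algebraMap (ZMod 2) K (v i) * x ^ (i : ℕ) := by
  simp [polyOfVec, map_sum]

lemma aeval_circulant {N : ℕ} (hN : 1 ≤ N) {K : Type*} [CommRing K] [Algebra (ZMod 2) K] (x : K)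
    (hx : x ^ N = 1) (v w : Fin N → ZMod 2) :
    aeval x (polyOfVec (circulant v *ᵥ w)) = aeval x (polyOfVec v) * aeval x (polyOfVec w) := by
  have : NeZero N := ⟨by omega⟩
  rw [aeval_polyOfVec, aeval_polyOfVec, aeval_polyOfVec, Finset.sum_mul_sum]
  simp only [mulVec, dotProduct, circulant_apply, map_sum, map_mul, Finset.sum_mul]
  rw [Finset.sum_comm]
  conv_rhs => rw [Finset.sum_comm]
  refine Finset.sum_congr rfl fun j _ => ?_
  refine Fintype.sum_equiv (Equiv.subRight j) _ _ fun i => ?_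
  obtain ⟨m, rfl⟩ : ∃ m, i = m + j := ⟨i - j, by simp⟩
  have h : x ^ ((m + j : Fin N) : ℕ) = x ^ (m : ℕ) * x ^ (j : ℕ) := by
    rw [Fin.val_add, ← pow_add]
    exact (pow_eq_pow_mod _ hx).symm
  simp only [Equiv.subRight_apply, add_sub_cancel_right, h]
  ring

lemma coeff_polyOfVec {N : ℕ} (v : Fin N → ZMod 2) (i : Fin N) :
    (polyOfVec v).coeff i = v i := by
  simp [polyOfVec, coeff_X_pow, Fin.val_inj]

lemma degree_polyOfVec {N : ℕ} (v : Fin N → ZMod 2) : (polyOfVec v).degree < N := by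
  refine (Polynomial.degree_sum_le _ _).trans_lt ?_
  rw [Finset.sup_lt_iff (by exact WithBot.bot_lt_coe N)]
  intro i _
  exact (degree_C_mul_X_pow_le _ _).trans_lt (by exact_mod_cast i.2)

lemma polyOfVec_surj {N : ℕ} (p : (ZMod 2)[X]) (hp : p.degree < N) :
    polyOfVec (fun i : Fin N => p.coeff i) = p := by
  ext n
  by_cases h : n < N
  · exact coeff_polyOfVec (fun i : Fin N => p.coeff i) ⟨n, h⟩
  · have h' : (N : WithBot ℕ) ≤ n := by exact_mod_cast not_lt.mp h
    rw [coeff_eq_zero_of_degree_lt ((degree_polyOfVec _).trans_le h'),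
      coeff_eq_zero_of_degree_lt (hp.trans_le h')]

/-- `polyOfVec` as a linear map. -/
noncomputable def polyLin (N : ℕ) : (Fin N → ZMod 2) →ₗ[ZMod 2] (ZMod 2)[X] where
  toFun := polyOfVec
  map_add' u v := by simp [polyOfVec, add_mul, Finset.sum_add_distrib]
  map_smul' c v := by simp [polyOfVec, Finset.smul_sum, smul_eq_C_mul, mul_assoc]

lemma polyOfVec_add {N : ℕ} (u v : Fin N → ZMod 2) :
    polyOfVec (u + v) = polyOfVec u + polyOfVec v := (polyLin N).map_add u v

lemma dvd_circulant {N : ℕ} (hN : 1 ≤ N) (v w : Fin N → ZMod 2) :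
    (X ^ N - 1 : (ZMod 2)[X]) ∣ polyOfVec (circulant v *ᵥ w) - polyOfVec v * polyOfVec w := by
  rw [← AdjoinRoot.mk_eq_zero, ← AdjoinRoot.aeval_eq, map_sub, map_mul,
    aeval_circulant hN, sub_self]
  have := AdjoinRoot.mk_self (f := (X ^ N - 1 : (ZMod 2)[X]))
  rw [← AdjoinRoot.aeval_eq] at this
  simpa [sub_eq_zero] using this

lemma degree_modulus {N : ℕ} (hN : 1 ≤ N) : (X ^ N - 1 : (ZMod 2)[X]).degree = N := by
  simpa using degree_X_pow_sub_C (R := ZMod 2) (n := N) hN 1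

lemma monic_modulus {N : ℕ} (hN : 1 ≤ N) : (X ^ N - 1 : (ZMod 2)[X]).Monic := by
  simpa using monic_X_pow_sub_C (R := ZMod 2) (n := N) 1 (by omega)

lemma exists_vec {N : ℕ} (hN : 1 ≤ N) (p : (ZMod 2)[X]) :
    ∃ v : Fin N → ZMod 2, (X ^ N - 1 : (ZMod 2)[X]) ∣ p - polyOfVec v := by
  have hm := monic_modulus hN
  refine ⟨fun i => (p %ₘ (X ^ N - 1)).coeff i, ?_⟩
  rw [polyOfVec_surj _ ((degree_modByMonic_lt _ hm).trans_eq (degree_modulus hN))]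
  exact ⟨p /ₘ (X ^ N - 1), by rw [sub_eq_iff_eq_add']; exact (modByMonic_add_div p _).symm⟩

lemma eq_of_dvd {N : ℕ} (hN : 1 ≤ N) (u v : Fin N → ZMod 2)
    (h : (X ^ N - 1 : (ZMod 2)[X]) ∣ polyOfVec u - polyOfVec v) : u = v := by
  have h0 : polyOfVec u - polyOfVec v = 0 := by
    refine eq_zero_of_dvd_of_degree_lt h ?_
    rw [degree_modulus hN]
    exact (degree_sub_le _ _).trans_lt (max_lt (degree_polyOfVec u) (degree_polyOfVec v))
  ext i
  rw [← coeff_polyOfVec u, ← coeff_polyOfVec v, sub_eq_zero.mp h0]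

lemma exists_bezout (p q : (ZMod 2)[X]) : ∃ x y, gcd p q = x * p + y * q := by
  have h : EuclideanDomain.gcd p q ∣ gcd p q :=
    dvd_gcd (EuclideanDomain.gcd_dvd_left p q) (EuclideanDomain.gcd_dvd_right p q)
  obtain ⟨c, hc⟩ := h
  refine ⟨EuclideanDomain.gcdA p q * c, EuclideanDomain.gcdB p q * c, ?_⟩
  rw [hc, EuclideanDomain.gcd_eq_gcd_ab p q]
  ring

lemma rank_HX {N : ℕ} (hN : 1 ≤ N) (va vb : Fin N → ZMod 2) (g : (ZMod 2)[X])
    (hg : g = gcd (gcd (polyOfVec va) (polyOfVec vb)) (X ^ N - 1)) :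
    (fromCols (circulant va) (circulant vb)).rank + g.natDegree = N := by
  have hgN : g ∣ X ^ N - 1 := hg ▸ gcd_dvd_right _ _
  have hga : g ∣ polyOfVec va := hg ▸ (gcd_dvd_left _ _).trans (gcd_dvd_left _ _)
  have hgb : g ∣ polyOfVec vb := hg ▸ (gcd_dvd_left _ _).trans (gcd_dvd_right _ _)
  have hg0 : g ≠ 0 := fun h => (monic_modulus hN).ne_zero (by rwa [h, zero_dvd_iff] at hgN)
  obtain ⟨x, y, z, hbez⟩ : ∃ x y z, g = x * polyOfVec va + y * polyOfVec vb
      + z * (X ^ N - 1) := by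
    obtain ⟨x, y, h1⟩ := exists_bezout (polyOfVec va) (polyOfVec vb)
    obtain ⟨s, t, h2⟩ := exists_bezout (gcd (polyOfVec va) (polyOfVec vb)) (X ^ N - 1)
    refine ⟨s * x, s * y, t, ?_⟩
    rw [hg, h2, h1]
    ring
  let φ : (Fin N → ZMod 2) →ₗ[ZMod 2] AdjoinRoot g :=
    (AdjoinRoot.mkₐ g).toLinearMap ∘ₗ polyLin N
  have hφ : ∀ u, φ u = AdjoinRoot.mk g (polyOfVec u) := fun u => rfl
  have hsurj : LinearMap.range φ = ⊤ := by
    rw [LinearMap.range_eq_top]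
    intro r
    obtain ⟨p, rfl⟩ := AdjoinRoot.mk_surjective r
    obtain ⟨v, hv⟩ := exists_vec hN p
    refine ⟨v, ?_⟩
    rw [hφ, eq_comm, AdjoinRoot.mk_eq_mk]
    exact hgN.trans hv
  have hker : LinearMap.ker φ =
      LinearMap.range (fromCols (circulant va) (circulant vb)).mulVecLin := by
    ext u
    rw [LinearMap.mem_ker, hφ, AdjoinRoot.mk_eq_zero, LinearMap.mem_range]
    constructor
    · rintro ⟨s, hs⟩
      obtain ⟨w1, h1⟩ := exists_vec hN (s * x)
      obtain ⟨w2, h2⟩ := exists_vec hN (s * y)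
      refine ⟨Sum.elim w1 w2, ?_⟩
      rw [mulVecLin_apply, fromCols_mulVec_sumElim]
      apply eq_of_dvd hN
      rw [polyOfVec_add]
      obtain ⟨c1, h1⟩ := h1
      obtain ⟨c2, h2⟩ := h2
      obtain ⟨c3, h3⟩ := dvd_circulant hN va w1
      obtain ⟨c4, h4⟩ := dvd_circulant hN vb w2
      refine ⟨c3 + c4 - c1 * polyOfVec va - c2 * polyOfVec vb - s * z, ?_⟩
      rw [hs]
      linear_combination h3 + h4 - polyOfVec va * h1 - polyOfVec vb * h2 - s * hbez
    · rintro ⟨w, rfl⟩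
      obtain ⟨w1, w2, rfl⟩ : ∃ w1 w2, w = Sum.elim w1 w2 :=
        ⟨w ∘ Sum.inl, w ∘ Sum.inr, (Sum.elim_comp_inl_inr w).symm⟩
      rw [mulVecLin_apply, fromCols_mulVec_sumElim, polyOfVec_add]
      exact dvd_add
        ((dvd_iff_dvd_of_dvd_sub (hgN.trans (dvd_circulant hN va w1))).mpr (hga.mul_right _))
        ((dvd_iff_dvd_of_dvd_sub (hgN.trans (dvd_circulant hN vb w2))).mpr (hgb.mul_right _))
  have h := LinearMap.finrank_range_add_finrank_ker φ
  rw [hsurj, finrank_top, hker, Module.finrank_fin_fun,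
    (AdjoinRoot.powerBasis hg0).finrank, AdjoinRoot.powerBasis_dim] at h
  rw [Matrix.rank]
  omega

lemma rank_HZ {N : ℕ} (hN : 1 ≤ N) (va vb : Fin N → ZMod 2) :
    (fromCols (circulant vb)ᵀ (circulant va)ᵀ).rank =
      (fromCols (circulant va) (circulant vb)).rank := by
  have : NeZero N := ⟨by omega⟩
  rw [← rank_submatrix (fromCols (circulant va) (circulant vb)) (Equiv.neg (Fin N))
    ((Equiv.sumComm _ _).trans (Equiv.sumCongr (Equiv.neg (Fin N)) (Equiv.neg (Fin N))))]
  congr 1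
  ext i j
  rcases j with j | j <;> simp [sub_eq_add_neg, add_comm]

/-- For a coprime BB code with `H_X = [A B]`, `H_Z = [Bᵀ Aᵀ]` and
`g = gcd(gcd(a,b), X^N - 1)`, one has `rank H_X = rank H_Z = N - deg g`; hence
`k = 2 deg g` and `r_X = r_Z = deg g = k/2`. -/
theorem bb_rank_and_redundancy (N : ℕ) (hN : 1 ≤ N) (va vb : Fin N → ZMod 2)
    (a b : Polynomial (ZMod 2)) (ha : a = polyOfVec va) (hb : b = polyOfVec vb)
    (g : Polynomial (ZMod 2)) (hg : g = gcd (gcd a b) (Polynomial.X ^ N - 1))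
    (HX HZ : Matrix (Fin N) (Fin N ⊕ Fin N) (ZMod 2))
    (hHX : HX = Matrix.fromCols (Matrix.circulant va) (Matrix.circulant vb))
    (hHZ : HZ = Matrix.fromCols (Matrix.circulant vb)ᵀ (Matrix.circulant va)ᵀ)
    (k rX rZ : ℕ)
    (hk : k = 2 * N - HX.rank - HZ.rank)
    (hrX : rX = N - HX.rank) (hrZ : rZ = N - HZ.rank) :
    HX.rank = N - g.natDegree ∧ HZ.rank = N - g.natDegree ∧
    k = 2 * g.natDegree ∧ rX = g.natDegree ∧ rZ = g.natDegree ∧ g.natDegree = k / 2 := by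
  subst ha hb hHX hHZ
  have h1 := rank_HX hN va vb g hg
  have h2 := rank_HZ hN va vb
  refine ⟨?_, ?_, ?_, ?_, ?_, ?_⟩ <;> omega
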